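/- For n ≥ 1, the number of infinitely modern Tamari intervals of size n equals (1/(2n+1)) · C(3n, n). -/

import Mathlib

/-- Binary trees: a leaf or a binary node with two subtrees. -/
inductive BT : Type
  | leaf : BT
  | node : BT → BT → BT

namespace BT

/-- Number of binary (internal) nodes. -/
def size : BT → ℕ
  | leaf => 0
  | node l r => l.size + r.size + 1

/-- One right rotation somewhere in the tree: ((A,B),C) ↦ (A,(B,C)). -/
inductive Rot : BT → BT → Prop
  | rotate (A B C : BT) : Rot (node (node A B) C) (node A (node B C))
  | left {l l' : BT} (r : BT) : Rot l l' → Rot (node l r) (node l' r)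
  | right (l : BT) {r r' : BT} : Rot r r' → Rot (node l r) (node l r')

/-- Tamari order: reflexive-transitive closure of right rotation. -/
def tle (T T' : BT) : Prop := Relation.ReflTransGen Rot T T'

/-- Bracket-vector: sizes of right subtrees of nodes, in infix order. -/
def bracket : BT → List ℕ
  | leaf => []
  | node l r => bracket l ++ r.size :: bracket r

/-- Dual bracket-vector: sizes of left subtrees of nodes, in infix order. -/
def dualBracket : BT → List ℕ
  | leaf => []
  | node l r => dualBracket l ++ l.size :: dualBracket r

/-- Canopy word: for each leaf (left to right), 1 if it is a left child, 0 if a right child;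
the argument `b` is the value assigned to the tree if it is itself a leaf. -/
def canopyAux (b : ℕ) : BT → List ℕ
  | leaf => [b]
  | node l r => canopyAux 1 l ++ canopyAux 0 r

/-- Canopy-vector of a binary tree. -/
def canopy (T : BT) : List ℕ := canopyAux 1 T

/-- Left-right mirror. -/
def mir : BT → BT
  | leaf => leaf
  | node l r => node (mir r) (mir l)

/-- Tamari interval of size n. -/
def interval (p : BT × BT) (n : ℕ) : Prop :=
  p.1.size = n ∧ p.2.size = n ∧ tle p.1 p.2

/-- Tamari interval (of unspecified size). -/
def isInt (p : BT × BT) : Prop := p.1.size = p.2.size ∧ tle p.1 p.2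

/-- The rise operation (T,T') ↦ ((T,ε),(ε,T')). -/
def riseF (p : BT × BT) : BT × BT := (node p.1 leaf, node leaf p.2)

/-- An interval is modern when its rise is again an interval. -/
def modern (p : BT × BT) : Prop := tle (node p.1 leaf) (node leaf p.2)

/-- Infinitely modern: every iterated rise is an interval. -/
def infModern (p : BT × BT) : Prop :=
  ∀ k : ℕ, tle ((riseF^[k] p).1) ((riseF^[k] p).2)

/-- Synchronized: equal canopies. -/
def synced (p : BT × BT) : Prop := canopy p.1 = canopy p.2

/-- Self-dual: equal to its dual (mir T', mir T). -/
def selfDual (p : BT × BT) : Prop := mir p.2 = p.1 ∧ mir p.1 = p.2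

/-- Number of positions where the two canopies agree. -/
def agreeCount (p : BT × BT) : ℕ :=
  ((List.range (p.1.size + 1)).filter
    (fun i => (canopy p.1).getD i 0 == (canopy p.2).getD i 0)).length

/-- Number of canopy positions of joint type (a on top, b on bottom), for an interval (T,T')
with T' the upper tree. -/
def typeCount (a b : ℕ) (p : BT × BT) : ℕ :=
  ((List.range (p.1.size + 1)).filter
    (fun i => ((canopy p.2).getD i 0 == a) && ((canopy p.1).getD i 0 == b))).length

end BT

namespace BT

/-- Function form of the bracket vector (zero outside the range). -/
def b : BT → ℕ → ℕ
  | leaf, _ => 0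
  | node l r, i => if i < l.size then b l i else if i = l.size then r.size else b r (i - l.size - 1)

theorem b_zero : ∀ (T : BT) (i : ℕ), T.size ≤ i → b T i = 0
  | leaf, _, _ => rfl
  | node l r, i, h => by
    simp only [size] at h
    have := b_zero r (i - l.size - 1) (by omega)
    simp only [b]
    split_ifs <;> omega

theorem b_le : ∀ (T : BT) (i : ℕ), i < T.size → i + 1 + b T i ≤ T.size
  | leaf, _, h => by simp [size] at h
  | node l r, i, h => by
    simp only [size] at h ⊢
    have h1 := b_le l i
    have h2 := b_le r (i - l.size - 1)
    simp only [b]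
    split_ifs <;> omega

theorem b_node_lt (l r : BT) (i : ℕ) (h : i < l.size) : b (node l r) i = b l i := by
  simp [b, h]

theorem b_node_eq (l r : BT) : b (node l r) l.size = r.size := by
  simp [b]

theorem b_node_gt (l r : BT) (i : ℕ) : b (node l r) (l.size + 1 + i) = b r i := by
  have h1 : ¬ (l.size + 1 + i < l.size) := by omega
  have h2 : ¬ (l.size + 1 + i = l.size) := by omega
  have h3 : l.size + 1 + i - l.size - 1 = i := by omega
  simp only [b, h1, h2, h3, if_false]

theorem b_node_raise (l : BT) (i : ℕ) : b (node l leaf) i = b l i := by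
  have := b_zero l i
  simp only [b, size]
  split_ifs <;> omega

theorem Rot.size_eq {T T' : BT} (h : Rot T T') : T.size = T'.size := by
  induction h <;> simp only [size] <;> omega

theorem Rot.b_le {T T' : BT} (h : Rot T T') : ∀ i, b T i ≤ b T' i := by
  induction h with
  | rotate A B C =>
    intro i
    rcases lt_trichotomy i A.size with h | h | h
    · rw [b_node_lt _ _ _ h, b_node_lt _ _ _ (by simp only [size]; omega), b_node_lt _ _ _ h]
    · subst h
      rw [b_node_eq, b_node_lt _ _ _ (by simp only [size]; omega), b_node_eq]
      simp only [size]; omega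
    · obtain ⟨j, rfl⟩ := Nat.exists_eq_add_of_lt h
      rw [show A.size + j + 1 = A.size + 1 + j by omega, b_node_gt]
      rcases lt_trichotomy j B.size with h | h | h
      · rw [b_node_lt _ _ _ h, b_node_lt _ _ _ (by simp only [size]; omega), b_node_gt]
      · subst h
        rw [b_node_eq, show A.size + 1 + B.size = (node A B).size by simp only [size]; omega,
          b_node_eq]
      · obtain ⟨k, rfl⟩ := Nat.exists_eq_add_of_lt h
        rw [show A.size + 1 + (B.size + k + 1) = (node A B).size + 1 + k by simp only [size]; omega,
          b_node_gt, show B.size + k + 1 = B.size + 1 + k by omega, b_node_gt]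
  | left r h ih =>
    intro i
    have e := h.size_eq
    have := ih i
    simp only [b, e]
    split_ifs <;> omega
  | right l h ih =>
    rename_i r r'
    intro i
    have e := h.size_eq
    have := ih (i - l.size - 1)
    simp only [b, e]
    split_ifs <;> omega

theorem tle.prop {T T' : BT} (h : tle T T') : T.size = T'.size ∧ ∀ i, b T i ≤ b T' i := by
  induction h with
  | refl => exact ⟨rfl, fun _ => le_rfl⟩
  | tail _ h2 ih => exact ⟨ih.1.trans h2.size_eq, fun i => (ih.2 i).trans (h2.b_le i)⟩

theorem tle.left {l l' : BT} (h : tle l l') (r : BT) : tle (node l r) (node l' r) := by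
  induction h with
  | refl => exact Relation.ReflTransGen.refl
  | tail _ h2 ih => exact ih.tail (Rot.left r h2)

theorem tle.right {r r' : BT} (h : tle r r') (l : BT) : tle (node l r) (node l r') := by
  induction h with
  | refl => exact Relation.ReflTransGen.refl
  | tail _ h2 ih => exact ih.tail (Rot.right l h2)

theorem split_at (T : BT) : ∀ k, k < T.size → (∀ i < k, i + 1 + b T i ≤ k) →
    ∃ A B, A.size = k ∧ A.size + B.size + 1 = T.size ∧ tle T (node A B) ∧
      (∀ i < k, b A i = b T i) ∧ ∀ i, b B i = b T (k + 1 + i) := by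
  induction T with
  | leaf => intro k h; simp [size] at h
  | node l r ihl ihr =>
    intro k hk hb
    simp only [size] at hk
    rcases lt_trichotomy k l.size with h | h | h
    · obtain ⟨A, B, hA, hAB, ht, h1, h2⟩ := ihl k h (fun i hi => by
        rw [← b_node_lt l r i (by omega)]; exact hb i hi)
      refine ⟨A, node B r, hA, ?_, ?_, ?_, ?_⟩
      · simp only [size]; omega
      · exact (ht.left r).tail (Rot.rotate A B r)
      · intro i hi; rw [h1 i hi, b_node_lt _ _ _ (by omega)]
      · intro i
        rcases lt_trichotomy i B.size with h | h | h
        · rw [b_node_lt _ _ _ h, b_node_lt _ _ _ (by omega), h2]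
        · subst h
          rw [b_node_eq, show k + 1 + B.size = l.size by omega, b_node_eq]
        · obtain ⟨j, rfl⟩ := Nat.exists_eq_add_of_lt h
          rw [show k + 1 + (B.size + j + 1) = l.size + 1 + j by omega, b_node_gt,
            show B.size + j + 1 = B.size + 1 + j by omega, b_node_gt]
    · subst h
      exact ⟨l, r, rfl, rfl, Relation.ReflTransGen.refl,
        fun i hi => (b_node_lt _ _ _ hi).symm, fun i => (b_node_gt _ _ _).symm⟩
    · have := hb l.size h
      rw [b_node_eq] at this
      omega

theorem tle_of_b (T' : BT) : ∀ T : BT, T.size = T'.size → (∀ i, b T i ≤ b T' i) → tle T T' := by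
  induction T' with
  | leaf =>
    intro T h _
    cases T with
    | leaf => exact Relation.ReflTransGen.refl
    | node l r => simp [size] at h
  | node L R ihL ihR =>
    intro T hs hb
    simp only [size] at hs
    obtain ⟨A, B, hA, hAB, ht, h1, h2⟩ := split_at T L.size (by omega) (fun i hi => by
      have := hb i
      rw [b_node_lt _ _ _ hi] at this
      have := b_le L i hi
      omega)
    have tA : tle A L := ihL A hA (fun i => by
      by_cases hi : i < L.size
      · rw [h1 i hi, ← b_node_lt L R i hi]; exact hb i
      · rw [b_zero A i (by omega)]; omega)
    have tB : tle B R := ihR B (by omega) (fun i => by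
      rw [h2, ← b_node_gt L R i]; exact hb _)
    exact (ht.trans (tA.left B)).trans (tB.right L)

theorem tle_iff (T T' : BT) : tle T T' ↔ T.size = T'.size ∧ ∀ i, b T i ≤ b T' i :=
  ⟨tle.prop, fun h => tle_of_b T' T h.1 h.2⟩

/-- Add a new root with empty right subtree. -/
def raise (T : BT) : BT := node T leaf

theorem size_raise_iter (k : ℕ) (T : BT) : (raise^[k] T).size = T.size + k := by
  induction k with
  | zero => rfl
  | succ k ih => rw [Function.iterate_succ_apply']; simp only [raise, size] at *; omega

theorem b_raise_iter (k : ℕ) (T : BT) (i : ℕ) : b (raise^[k] T) i = b T i := by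
  induction k with
  | zero => rfl
  | succ k ih => rw [Function.iterate_succ_apply', raise, b_node_raise, ih]

theorem size_low_iter (k : ℕ) (T : BT) : ((node leaf)^[k] T).size = T.size + k := by
  induction k with
  | zero => rfl
  | succ k ih => rw [Function.iterate_succ_apply']; simp only [size] at *; omega

theorem b_low_iter (k : ℕ) (T : BT) : ∀ i, b ((node leaf)^[k] T) i =
    if i < k then T.size + k - 1 - i else b T (i - k) := by
  induction k with
  | zero => intro i; simp
  | succ k ih =>
    intro i
    rw [Function.iterate_succ_apply']
    cases i with
    | zero => have := b_node_eq leaf ((node leaf)^[k] T)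
              simp only [size, size_low_iter] at this
              rw [this]; simp
    | succ i => have := b_node_gt leaf ((node leaf)^[k] T) i
                simp only [size] at this
                rw [show i + 1 = 0 + 1 + i by omega, this, ih]
                simp only [show 0 + 1 + i = i + 1 by omega, Nat.add_lt_add_iff_right,
                  Nat.add_sub_add_right]
                split_ifs <;> omega

theorem rise_iter (k : ℕ) (p : BT × BT) :
    riseF^[k] p = (raise^[k] p.1, (node leaf)^[k] p.2) := by
  induction k with
  | zero => rfl
  | succ k ih => simp only [Function.iterate_succ_apply', ih, riseF, raise]

/-- Combinatorial description of infinitely modern intervals. -/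
def Good (T T' : BT) : Prop := T.size = T'.size ∧ ∀ k i, b T (i + k) ≤ b T' i

theorem good_iff (n : ℕ) (p : BT × BT) :
    (interval p n ∧ infModern p) ↔ (p.2.size = n ∧ Good p.1 p.2) := by
  obtain ⟨T, T'⟩ := p
  simp only [interval, infModern, Good, rise_iter, tle_iff, size_raise_iter, size_low_iter,
    b_raise_iter, b_low_iter]
  constructor
  · rintro ⟨⟨h1, h2, h3, h4⟩, h5⟩
    refine ⟨h2, h3, fun k i => ?_⟩
    have := (h5 k).2 (i + k)
    simpa using this
  · rintro ⟨h1, h2, h3⟩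
    refine ⟨⟨by omega, h1, h2, fun i => h3 0 i⟩, fun k => ⟨by omega, fun i => ?_⟩⟩
    split_ifs with h
    · by_cases hi : i < T.size
      · have := b_le T i hi
        omega
      · rw [b_zero T i (by omega)]; omega
    · have := h3 k (i - k)
      rwa [show i - k + k = i by omega] at this

/-- Delete the first node in infix order. -/
def del : BT → BT
  | leaf => leaf
  | node leaf r => r
  | node (node a c) r => node (del (node a c)) r

theorem size_del : ∀ T : BT, T ≠ leaf → T.size = (del T).size + 1
  | leaf, h => absurd rfl h
  | node leaf r, _ => by simp [del, size]
  | node (node a c) r, _ => by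
    have := size_del (node a c) (by simp)
    rw [del]
    simp only [size] at *
    omega

theorem b_del : ∀ T : BT, T ≠ leaf → ∀ i, b (del T) i = b T (i + 1)
  | leaf, h, _ => absurd rfl h
  | node leaf r, _, i => by simp [del, b, size]
  | node (node a c) r, _, i => by
    have h1 := size_del (node a c) (by simp)
    have h2 := b_del (node a c) (by simp) i
    rw [del, b, b, h1, h2, show i + 1 - ((node a c).del.size + 1) - 1 = i - (node a c).del.size - 1 by omega]
    simp only [Nat.add_lt_add_iff_right, Nat.add_right_cancel_iff]

/-- All trees from which deletion of the first node gives the argument. -/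
def ins : BT → List BT
  | leaf => [node leaf leaf]
  | node l r => node leaf (node l r) :: (ins l).map (fun t => node t r)

theorem mem_ins : ∀ S T : BT, T ∈ ins S ↔ (T ≠ leaf ∧ del T = S)
  | S, leaf => by cases S <;> simp [ins]
  | leaf, node leaf r => by simp [ins, del]
  | leaf, node (node a c) r => by simp [ins, del]
  | node l r, node leaf r' => by
    have := mem_ins l leaf
    simp only [ins, del]
    simp [this]
  | node l r, node (node a c) r' => by
    have := mem_ins l (node a c)
    simp [ins, del, this]
    exact fun _ => eq_comm

theorem nodup_ins : ∀ S : BT, (ins S).Nodup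
  | leaf => by simp [ins]
  | node l r => by
    simp only [ins, List.nodup_cons]
    refine ⟨?_, (nodup_ins l).map (fun x y h => by simpa using h)⟩
    simp [mem_ins]

theorem good_leaf (T : BT) : Good T leaf ↔ T = leaf := by
  constructor
  · intro h
    cases T with
    | leaf => rfl
    | node l r => have := h.1; simp [size] at this
  · rintro rfl; exact ⟨rfl, fun _ _ => le_rfl⟩

theorem good_node_leaf (T R : BT) : Good T (node leaf R) ↔ (T ≠ leaf ∧ Good (del T) R) := by
  have h0 : b (node leaf R) 0 = R.size := b_node_eq leaf R
  have h1 : ∀ i, b (node leaf R) (i + 1) = b R i := fun i => by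
    have := b_node_gt leaf R i
    rwa [show leaf.size + 1 + i = i + 1 by simp only [size]; omega] at this
  constructor
  · rintro ⟨hs, hb⟩
    have hT : T ≠ leaf := by rintro rfl; simp [size] at hs
    have := size_del T hT
    simp only [size] at hs
    refine ⟨hT, by omega, fun k i => ?_⟩
    rw [b_del T hT, ← h1]
    have := hb k (i + 1)
    rwa [show i + 1 + k = i + k + 1 by omega] at this
  · rintro ⟨hT, hs, hb⟩
    have := size_del T hT
    refine ⟨by simp only [size]; omega, fun k i => ?_⟩
    cases i with
    | zero =>
      rw [h0]
      by_cases hi : 0 + k < T.size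
      · have := b_le T _ hi; omega
      · rw [b_zero T _ (by omega)]; omega
    | succ i =>
      rw [h1, show i + 1 + k = i + k + 1 by omega, ← b_del T hT]
      exact hb k i

theorem exists_raise (m s : ℕ) : ∀ T : BT, T.size = m + s →
    (∀ i < m, i + 1 + b T i ≤ m) → (∀ i, m ≤ i → b T i = 0) → ∃ S, S.size = m ∧ T = raise^[s] S := by
  induction s with
  | zero => intro T h _ _; exact ⟨T, h, rfl⟩
  | succ s ih =>
    intro T h h1 h2
    cases T with
    | leaf => simp [size] at h
    | node l r =>
      have hr : r = leaf := by
        cases r with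
        | leaf => rfl
        | node c d =>
          exfalso
          have e := b_node_eq l (node c d)
          simp only [size] at h e
          by_cases hl : l.size < m
          · have := h1 _ hl
            omega
          · have := h2 l.size (by omega)
            omega
      subst hr
      simp only [b_node_raise] at h1 h2
      obtain ⟨S, hS, e⟩ := ih l (by simp only [size] at h; omega) h1 h2
      exact ⟨S, hS, by rw [Function.iterate_succ_apply', ← e, raise]⟩

theorem good_node (T L R : BT) (hL : L ≠ leaf) :
    Good T (node L R) ↔ ∃ S, Good S L ∧ raise^[R.size + 1] S = T := by
  have hL0 : 0 < L.size := by
    cases L with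
    | leaf => exact absurd rfl hL
    | node l r => simp [size]
  constructor
  · rintro ⟨hs, hb⟩
    simp only [size] at hs
    have hz : ∀ i, L.size - 1 ≤ i → b T i = 0 := fun i hi => by
      have h1 := hb (i - (L.size - 1)) (L.size - 1)
      rw [b_node_lt _ _ _ (by omega)] at h1
      have h2 := b_le L (L.size - 1) (by omega)
      rw [show L.size - 1 + (i - (L.size - 1)) = i by omega] at h1
      omega
    obtain ⟨S, hS, e⟩ := exists_raise L.size (R.size + 1) T (by omega) (fun i hi => by
      have h1 := hb 0 i
      rw [b_node_lt _ _ _ hi] at h1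
      have h2 := b_le L i hi
      simp only [Nat.add_zero] at h1
      omega) (fun i hi => hz i (by omega))
    refine ⟨S, ⟨hS, fun k i => ?_⟩, e.symm⟩
    rw [← b_raise_iter (R.size + 1) S, ← e]
    by_cases hi : i < L.size
    · rw [← b_node_lt L R i hi]; exact hb k i
    · rw [hz _ (by omega)]; omega
  · rintro ⟨S, ⟨hs, hb⟩, rfl⟩
    refine ⟨by rw [size_raise_iter]; simp only [size]; omega, fun k i => ?_⟩
    rw [b_raise_iter]
    by_cases hi : i < L.size
    · rw [b_node_lt L R i hi]; exact hb k i
    · rw [b_zero S _ (by omega)]; omega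

/-- Enumeration of all lower trees of infinitely modern intervals with given upper tree. -/
def en : BT → List BT
  | leaf => [leaf]
  | node leaf R => (en R).flatMap ins
  | node (node a c) R => (en (node a c)).map (raise^[R.size + 1])

theorem mem_en : ∀ T' T : BT, T ∈ en T' ↔ Good T T'
  | leaf, T => by simp [en, good_leaf]
  | node leaf R, T => by
    rw [en, good_node_leaf, List.mem_flatMap]
    simp only [mem_ins, mem_en R]
    constructor
    · rintro ⟨a, h, h1, rfl⟩; exact ⟨h1, h⟩
    · rintro ⟨h1, h⟩; exact ⟨_, h, h1, rfl⟩
  | node (node a c) R, T => by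
    rw [en, good_node _ _ _ (by simp), List.mem_map]
    simp only [mem_en (node a c)]

theorem raise_inj : Function.Injective raise := fun x y h => by simpa [raise] using h

theorem nodup_en : ∀ T' : BT, (en T').Nodup
  | leaf => by simp [en]
  | node leaf R => by
    rw [en, List.nodup_flatMap]
    refine ⟨fun x _ => nodup_ins x, (nodup_en R).imp ?_⟩
    intro x y hxy t hx hy
    rw [mem_ins] at hx hy
    exact hxy (hx.2.symm.trans hy.2)
  | node (node a c) R => by
    rw [en]
    exact (nodup_en (node a c)).map (raise_inj.iterate _)

/-- Length of the left branch. -/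
def ll : BT → ℕ
  | leaf => 0
  | node l _ => ll l + 1

theorem ll_raise_iter (k : ℕ) (T : BT) : ll (raise^[k] T) = ll T + k := by
  induction k with
  | zero => rfl
  | succ k ih => rw [Function.iterate_succ_apply', raise, ll, ih]; omega

open Polynomial in
/-- Weight of a list of trees. -/
noncomputable def wt (s : List BT) : ℤ[X] := (s.map (fun T => (X : ℤ[X]) ^ ll T)).sum

open Polynomial in
theorem wt_map_node (s : List BT) (r : BT) : wt (s.map (fun t => node t r)) = X * wt s := by
  simp only [wt, List.map_map, ← List.sum_map_mul_left]
  congr 1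
  apply List.map_congr_left
  intro t _
  simp [ll, pow_succ']

open Polynomial in
theorem wt_cons (t : BT) (s : List BT) : wt (t :: s) = X ^ ll t + wt s := by simp [wt]

open Polynomial in
theorem wt_ins : ∀ S : BT, (1 - X) * wt (ins S) = X * (1 - X * X ^ ll S)
  | leaf => by simp [ins, wt, ll]; ring
  | node l r => by
    have := wt_ins l
    rw [ins, wt_cons, wt_map_node]
    simp only [ll]
    linear_combination X * this

open Polynomial in
theorem wt_flatMap_ins (s : List BT) :
    (1 - X) * wt (s.flatMap ins) = X * (C ((wt s).eval 1) - X * wt s) := by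
  induction s with
  | nil => simp [wt]
  | cons t s ih =>
    have h1 : wt ((t :: s).flatMap ins) = wt (ins t) + wt (s.flatMap ins) := by
      simp [wt]
    rw [h1, mul_add, ih, wt_ins, wt_cons]
    simp
    ring

open Polynomial in
theorem wt_raise (s : List BT) (k : ℕ) : wt (s.map (raise^[k])) = X ^ k * wt s := by
  simp only [wt, List.map_map, ← List.sum_map_mul_left]
  congr 1
  apply List.map_congr_left
  intro t _
  simp [ll_raise_iter, pow_add, mul_comm]

theorem wt_eval (s : List BT) : (wt s).eval 1 = s.length := by
  induction s with
  | nil => simp [wt]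
  | cons t s ih => rw [wt_cons]; simp [ih]; ring

end BT
namespace TernAux

/-- Ternary tree numbers. -/
def tern : ℕ → ℤ
  | 0 => 1
  | n + 1 => ∑ i : Fin (n + 1), tern i * ∑ j : Fin (n - i + 1), tern j * tern (n - i - j)

open PowerSeries in
/-- The ternary series. -/
noncomputable def U : PowerSeries ℤ := PowerSeries.mk tern

open PowerSeries in
theorem U_eq : U = 1 + X * U ^ 3 := by
  ext n
  cases n with
  | zero => simp [U, tern]
  | succ n =>
    have h : ∀ m, coeff m (U * U) = ∑ j : Fin (m + 1), tern j * tern (m - j) := by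
      intro m
      rw [coeff_mul, Finset.Nat.sum_antidiagonal_eq_sum_range_succ_mk, Finset.sum_range]
      simp [U]
    rw [map_add, coeff_succ_X_mul, show U ^ 3 = U * (U * U) by ring, coeff_mul,
      Finset.Nat.sum_antidiagonal_eq_sum_range_succ_mk, Finset.sum_range]
    simp only [h]
    simp [U, tern, coeff_one]

open PowerSeries in
theorem U_ode : 4 * (X * (derivative ℤ (derivative ℤ U))) + 6 * derivative ℤ U =
    27 * (X * (X * (derivative ℤ (derivative ℤ U)))) + 54 * (X * derivative ℤ U) + 6 * U := by
  have h := U_eq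
  have h1 := congrArg (derivative ℤ) h
  simp only [map_add, Derivation.leibniz, Derivation.leibniz_pow, derivative_X, smul_eq_mul,
    Derivation.map_one_eq_zero, nsmul_eq_mul] at h1
  have h1' : derivative ℤ U = U * U * U + 3 * (X * (U * (U * derivative ℤ U))) := by
    push_cast at h1
    linear_combination h1
  have h3 : derivative ℤ (3 : PowerSeries ℤ) = 0 := by
    have := Derivation.map_natCast (derivative ℤ) 3
    exact_mod_cast this
  have h2 := congrArg (derivative ℤ) h1'
  simp only [map_add, Derivation.leibniz, derivative_X, smul_eq_mul, h3] at h2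
  generalize derivative ℤ (derivative ℤ U) = Q at *
  generalize derivative ℤ U = P at *
  have hE : (1 - 3 * X * U ^ 2) ≠ 0 := by
    intro h0
    have := congrArg (coeff 0) h0
    simp at this
  have k1 : P * (1 - 3 * X * U ^ 2) - U ^ 3 = 0 := by linear_combination h1'
  have k2 : Q * (1 - 3 * X * U ^ 2) - 6 * U ^ 2 * P - 6 * X * U * P ^ 2 = 0 := by
    linear_combination h2
  have k0 : U - 1 - X * U ^ 3 = 0 := by linear_combination h
  apply mul_left_cancel₀ (pow_ne_zero 3 hE)
  rw [← sub_eq_zero]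
  linear_combination X * (4 - 27 * X) * ((1 - 3 * X * U ^ 2) ^ 2 * k2 +
    (6 * U ^ 2 * (1 - 3 * X * U ^ 2) + 6 * X * U * (P * (1 - 3 * X * U ^ 2) + U ^ 3)) * k1) +
    (6 - 54 * X) * (1 - 3 * X * U ^ 2) ^ 2 * k1 + 6 * U * (U * (1 - X * U ^ 2) + 1) * k0

open PowerSeries in
theorem tern_rec (n : ℕ) : (2 * (n + 1) * (2 * n + 3) : ℤ) * tern (n + 1) =
    3 * (3 * n + 2) * (3 * n + 1) * tern n := by
  have h := congrArg (coeff n) U_ode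
  have e : ∀ (k : ℕ) (f : PowerSeries ℤ) (m : ℕ), coeff m ((k : PowerSeries ℤ) * f) = k * coeff m f := by
    intro k f m
    rw [← nsmul_eq_mul, map_nsmul, nsmul_eq_mul]
  have e4 := e 4
  have e6 := e 6
  have e27 := e 27
  have e54 := e 54
  push_cast at e4 e6 e27 e54
  simp only [map_add, e4, e6, e27, e54] at h
  match n, h with
  | 0, h =>
    simp [coeff_derivative, U] at h
    simp
    omega
  | 1, h =>
    simp [coeff_derivative, U, coeff_succ_X_mul] at h
    norm_num at h ⊢
    linarith
  | n + 2, h =>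
    simp only [coeff_derivative, U, coeff_succ_X_mul, coeff_mk] at h
    push_cast at h ⊢
    linear_combination h

theorem tern_choose (n : ℕ) : (2 * n + 1 : ℤ) * tern n = Nat.choose (3 * n) n := by
  induction n with
  | zero => simp [tern]
  | succ n ih =>
    have h := tern_rec n
    have c1 := Nat.choose_mul_succ_eq (3 * n) n
    have c2 := Nat.choose_mul_succ_eq (3 * n + 1) n
    have c3 := Nat.add_one_mul_choose_eq (3 * n + 2) n
    rw [show 3 * n + 1 - n = 2 * n + 1 by omega] at c1
    rw [show 3 * n + 1 + 1 - n = 2 * n + 2 by omega] at c2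
    rw [show 3 * (n + 1) = 3 * n + 2 + 1 by omega]
    have hz : ((n + 1) * (2 * n + 2) * (2 * n + 1) : ℤ) ≠ 0 := by positivity
    apply mul_left_cancel₀ hz
    zify at c1 c2 c3
    simp only [Nat.add_assoc, Nat.reduceAdd] at *
    push_cast at *
    linear_combination (n + 1) * (2 * n + 1) * h + (3 * n + 3) * (3 * n + 2) * (3 * n + 1) * ih +
      (3 * n + 3) * (3 * n + 2) * c1 + (3 * n + 3) * (2 * n + 1) * c2 +
      (2 * n + 2) * (2 * n + 1) * c3
end TernAux
namespace BT

/-- Conversion from Mathlib's binary trees. -/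
def ofT : BinaryTree Unit → BT
  | .nil => leaf
  | .node _ l r => node (ofT l) (ofT r)

/-- Conversion to Mathlib's binary trees. -/
def toT : BT → BinaryTree Unit
  | leaf => .nil
  | node l r => .node () (toT l) (toT r)

theorem ofT_toT : ∀ T : BT, ofT (toT T) = T
  | leaf => rfl
  | node l r => by rw [toT, ofT, ofT_toT l, ofT_toT r]

theorem toT_ofT : ∀ t : BinaryTree Unit, toT (ofT t) = t
  | .nil => rfl
  | .node _ l r => by rw [ofT, toT, toT_ofT l, toT_ofT r]

theorem size_ofT : ∀ t : BinaryTree Unit, (ofT t).size = t.numNodes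
  | .nil => rfl
  | .node _ l r => by rw [ofT, size, BinaryTree.numNodes, size_ofT l, size_ofT r]

open BinaryTree in
theorem sum_trees_succ {M : Type*} [AddCommMonoid M] (g : BinaryTree Unit → M) (n : ℕ) :
    ∑ t ∈ treesOfNumNodesEq (n + 1), g t =
      ∑ ij ∈ Finset.HasAntidiagonal.antidiagonal n, ∑ a ∈ treesOfNumNodesEq ij.1,
        ∑ c ∈ treesOfNumNodesEq ij.2, g (.node () a c) := by
  rw [treesOfNumNodesEq_succ, Finset.sum_biUnion]
  · apply Finset.sum_congr rfl
    intro ij _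
    rw [Finset.sum_map, Finset.sum_product]
    rfl
  · intro ij _ kl _ hne
    rw [Function.onFun, Finset.disjoint_left]
    intro t h1 h2
    simp only [Finset.mem_map, Finset.mem_product, mem_treesOfNumNodesEq,
      Function.Embedding.coeFn_mk, Prod.exists] at h1 h2
    obtain ⟨a, c, ⟨ha, hc⟩, rfl⟩ := h1
    obtain ⟨a', c', ⟨ha', hc'⟩, h⟩ := h2
    have h : a' = a ∧ c' = c := by simpa using h
    obtain ⟨rfl, rfl⟩ := h
    exact hne (Prod.ext (ha.symm.trans ha') (hc.symm.trans hc'))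

open Polynomial BinaryTree in
/-- Refined counting polynomial. -/
noncomputable def f (n : ℕ) : ℤ[X] := ∑ t ∈ treesOfNumNodesEq n, wt (en (ofT t))

theorem f_zero : f 0 = 1 := by
  simp [f, ofT, en, wt, ll]

open Polynomial BinaryTree in
theorem f_succ (n : ℕ) : (1 - X) * f (n + 1) = X * (C ((f n).eval 1) - X * f n) +
    (1 - X) * (∑ ij ∈ Finset.HasAntidiagonal.antidiagonal n, f ij.1 * ((catalan ij.2 : ℤ[X]) * X ^ (ij.2 + 1))
      - (catalan n : ℤ[X]) * X ^ (n + 1)) := by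
  have h1 : f (n + 1) = ∑ c ∈ treesOfNumNodesEq n, wt (en (node leaf (ofT c))) +
      ((∑ ij ∈ Finset.HasAntidiagonal.antidiagonal n, f ij.1 * ((catalan ij.2 : ℤ[X]) * X ^ (ij.2 + 1)))
      - (catalan n : ℤ[X]) * X ^ (n + 1)) := by
    rw [f, sum_trees_succ]
    cases n with
    | zero => simp [ofT, f, en, wt, ll]
    | succ n =>
      rw [Finset.Nat.antidiagonal_succ, Finset.sum_cons, Finset.sum_cons]
      simp only [treesOfNumNodesEq_zero, Finset.sum_singleton, f_zero, ofT]
      rw [one_mul, add_sub_cancel_left, Finset.sum_map, Finset.sum_map]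
      congr 1
      apply Finset.sum_congr rfl
      intro ij _
      simp only [Function.Embedding.prodMap, Function.Embedding.coeFn_mk, Prod.map,
        Function.Embedding.refl_apply, f]
      rw [Finset.sum_mul]
      apply Finset.sum_congr rfl
      intro a ha
      have : ∀ c ∈ treesOfNumNodesEq ij.2, wt (en (node (ofT a) (ofT c))) =
          X ^ (ij.2 + 1) * wt (en (ofT a)) := by
        intro c hc
        rw [mem_treesOfNumNodesEq] at ha hc
        cases a with
        | nil => simp at ha
        | node _ a1 a2 =>
          rw [ofT, en, wt_raise, size_ofT, hc]
      rw [Finset.sum_congr rfl this, Finset.sum_const, treesOfNumNodesEq_card_eq_catalan,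
        nsmul_eq_mul]
      ring
  rw [h1, mul_add]
  congr 1
  rw [Finset.mul_sum, f, Polynomial.eval_finsetSum, map_sum, Finset.mul_sum,
    ← Finset.sum_sub_distrib, Finset.mul_sum]
  apply Finset.sum_congr rfl
  intro t _
  rw [en, wt_flatMap_ins]

open BinaryTree in
theorem ncard_eq (n : ℕ) :
    (Set.ncard {p : BT × BT | interval p n ∧ infModern p} : ℤ) = (f n).eval 1 := by
  classical
  have h : {p : BT × BT | interval p n ∧ infModern p} =
      (((treesOfNumNodesEq n).sigma (fun t => (en (ofT t)).toFinset)).image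
        (fun s => (s.2, ofT s.1)) : Finset (BT × BT)) := by
    ext ⟨T, T'⟩
    simp only [Set.mem_ofPred_eq, good_iff, Finset.coe_image, Set.mem_image, Finset.mem_coe,
      Finset.mem_sigma, mem_treesOfNumNodesEq, List.mem_toFinset, mem_en, Prod.mk.injEq]
    constructor
    · rintro ⟨h1, h2⟩
      refine ⟨⟨toT T', T⟩, ⟨?_, ?_⟩, rfl, ofT_toT _⟩
      · rw [← size_ofT, ofT_toT]; exact h1
      · rw [ofT_toT]; exact h2
    · rintro ⟨⟨t, S⟩, ⟨h1, h2⟩, rfl, rfl⟩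
      exact ⟨by rw [size_ofT]; exact h1, h2⟩
  rw [h, Set.ncard_coe_finset, Finset.card_image_of_injective, Finset.card_sigma, f,
    Polynomial.eval_finsetSum]
  · push_cast
    apply Finset.sum_congr rfl
    intro t _
    rw [wt_eval, List.toFinset_card_of_nodup (nodup_en _)]
  · rintro ⟨t, S⟩ ⟨t', S'⟩ h
    simp only [Prod.mk.injEq] at h
    obtain ⟨rfl, h⟩ := h
    have := congrArg toT h
    rw [toT_ofT, toT_ofT] at this
    subst this
    rfl

/-- The series of refined counts. -/
noncomputable def F : PowerSeries (Polynomial ℤ) := PowerSeries.mk f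

/-- The series of counts. -/
noncomputable def A : PowerSeries ℤ := PowerSeries.mk (fun n => (f n).eval 1)

/-- The Catalan series in `x u`. -/
noncomputable def Cat : PowerSeries (Polynomial ℤ) :=
  PowerSeries.mk (fun n => (catalan n : Polynomial ℤ) * Polynomial.X ^ n)

/-- The variable `u`. -/
noncomputable def uu : PowerSeries (Polynomial ℤ) := PowerSeries.C Polynomial.X

/-- Embedding of series constant in `u`. -/
noncomputable def emb : PowerSeries ℤ →+* PowerSeries (Polynomial ℤ) :=
  PowerSeries.map Polynomial.C

open PowerSeries in
theorem Cat_eq : Cat = 1 + X * uu * Cat ^ 2 := by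
  ext1 n
  cases n with
  | zero => simp [Cat, uu, mul_assoc]
  | succ n =>
    rw [map_add, mul_assoc, coeff_succ_X_mul, uu, coeff_C_mul, pow_two, coeff_mul, Cat]
    simp only [coeff_mk, catalan_succ', Nat.cast_sum, Nat.cast_mul]
    rw [Finset.mul_sum, Finset.sum_mul]
    simp only [coeff_one, Nat.succ_ne_zero, if_false, zero_add]
    apply Finset.sum_congr rfl
    intro ij hij
    rw [Finset.HasAntidiagonal.mem_antidiagonal] at hij
    rw [← hij]
    ring

open PowerSeries in
theorem F_eq : (1 - uu) * (F - 1) = X * (uu * (emb A - uu * F)) +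
    (1 - uu) * (X * (uu * ((F - 1) * Cat))) := by
  have hu : (1 - uu) = C (1 - Polynomial.X) := by simp [uu]
  rw [hu]
  ext1 n
  cases n with
  | zero => simp [F, f_zero]
  | succ n =>
    rw [map_add, coeff_C_mul, coeff_C_mul, coeff_succ_X_mul, coeff_succ_X_mul, uu, coeff_C_mul,
      coeff_C_mul, map_sub, map_sub, coeff_C_mul, sub_mul F 1 Cat, one_mul, map_sub (coeff n),
      coeff_mul]
    have h := f_succ n
    simp only [F, emb, A, Cat, coeff_mk, coeff_map, coeff_one, Nat.succ_ne_zero, if_false, sub_zero]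
    rw [h]
    congr 2
    rw [mul_sub, Finset.mul_sum]
    congr 1
    · apply Finset.sum_congr rfl
      intro ij _
      ring
    · ring

open PowerSeries in
theorem emb_eq_zero (c : PowerSeries ℤ) (U : PowerSeries ℤ)
    (Q : PowerSeries (Polynomial ℤ)) (h0 : coeff 0 U = 1)
    (h : emb c = (uu - emb U) * Q) : c = 0 := by
  have hQ : ∀ n, coeff n Q = 0 := by
    intro n
    induction n using Nat.strong_induction_on with
    | _ n ih =>
      have h1 := congrArg (coeff n) h
      rw [coeff_mul, Finset.sum_eq_single (0, n)] at h1
      · simp only [emb, uu, coeff_map, map_sub, coeff_zero_C, h0] at h1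
        by_contra hne
        have h2 := congrArg Polynomial.natDegree h1
        rw [Polynomial.natDegree_C, Polynomial.natDegree_mul (Polynomial.X_sub_C_ne_zero 1) hne,
          Polynomial.natDegree_X_sub_C] at h2
        omega
      · intro ij hij hne
        rw [Finset.HasAntidiagonal.mem_antidiagonal] at hij
        rw [ih ij.2, mul_zero]
        by_contra hlt
        exact hne (Prod.ext (by simp only; omega) (by simp only; omega))
      · intro h; simp at h
  have hQ0 : Q = 0 := by ext1 n; simpa using hQ n
  rw [hQ0, mul_zero] at h
  ext n
  have h1 := congrArg (coeff n) h
  simpa [emb] using h1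

open PowerSeries in
theorem A_eq : A = TernAux.U := by
  have hU := TernAux.U_eq
  have hV : emb TernAux.U = 1 + X * emb TernAux.U ^ 3 := by
    have := congrArg emb hU
    rw [map_add, map_mul, map_pow, map_one] at this
    simpa [emb] using this
  have hC := Cat_eq
  have hF := F_eq
  have h0 : coeff 0 TernAux.U = 1 := by simp [TernAux.U, TernAux.tern]
  have hunit : IsUnit (1 - X * uu * (Cat + emb TernAux.U)) := by
    rw [PowerSeries.isUnit_iff_constantCoeff]
    simp
  obtain ⟨w, hw⟩ := hunit.exists_right_inv
  have key := emb_eq_zero ((TernAux.U - 1) * (A - TernAux.U)) TernAux.U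
  set V := emb TernAux.U with hVdef
  -- Cat - V = x V^2 (u - V) w
  have k1 : Cat - V = X * V ^ 2 * (uu - V) * w := by
    linear_combination (w - 0) * (hC - hV) - (Cat - V) * hw
  have k2 : Cat - uu = (uu - V) * (X * V ^ 2 * w - 1) := by
    linear_combination k1
  -- kernel equation
  have k3 : F * (Cat - uu) = (1 - uu) * Cat + (Cat - 1) * emb A := by
    have k3a : (1 - uu) * (F - 1) = X * uu * Cat * (emb A - uu * F) := by
      linear_combination Cat * hF - (1 - uu) * (F - 1) * hC
    linear_combination Cat * k3a - (emb A - uu * F) * hC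
  have hA : (TernAux.U - 1) * (A - TernAux.U) = 0 := by
    apply key ((F - (1 - uu) - emb A) * (X * V ^ 2 * w - 1) - (emb A - V) + (uu - 1)) h0
    rw [map_mul, map_sub, map_sub, map_one, ← hVdef]
    linear_combination (F - (1 - uu) - emb A) * k2 - k3
  rcases mul_eq_zero.1 hA with h | h
  · exfalso
    have h1 := congrArg (coeff 1) h
    rw [hU] at h1
    simp [coeff_one, TernAux.U, TernAux.tern] at h1
  · exact sub_eq_zero.1 h

end BT

theorem count_infinitely_modern_intervals (n : ℕ) (hn : 1 ≤ n) :
    (2 * n + 1) * Set.ncard {p : BT × BT | BT.interval p n ∧ BT.infModern p} =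
      Nat.choose (3 * n) n := by
  have h1 := BT.ncard_eq n
  have h2 := congrArg (PowerSeries.coeff n) BT.A_eq
  rw [BT.A, TernAux.U, PowerSeries.coeff_mk, PowerSeries.coeff_mk] at h2
  have h3 := TernAux.tern_choose n
  zify
  rw [h1, h2, h3]
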